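/- Let Γ be a planar lattice, R a coincidence reflection of Γ, and suppose w, z ∈ Γ are primitive in Γ with Rw = w and Rz = −z. Set Γ_R = ℤw + ℤz and Γ̃_R = ℤ·(w+z)/2 + ℤ·(w−z)/2. Then the coincidence site lattice Γ(R) = Γ ∩ RΓ equals Γ_R or Γ̃_R, and Γ(R) = Γ̃_R holds if and only if the index [Γ : Γ_R] is even. -/

import Mathlib

noncomputable section

open scoped RealInnerProductSpace

/-- The Euclidean plane. -/
abbrev EucPlane : Type := EuclideanSpace ℝ (Fin 2)

/-- A planar lattice: the additive subgroup generated by two linearly independent vectors. -/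
def IsPlanarLattice (Λ : AddSubgroup EucPlane) : Prop :=
  ∃ v₁ v₂ : EucPlane, LinearIndependent ℝ ![v₁, v₂] ∧ Λ = AddSubgroup.closure {v₁, v₂}

/-- A vector `w` is primitive in `Λ` if `w ∈ Λ` and it is not a proper integral
multiple of a lattice vector. -/
def IsPrimitiveIn (Λ : AddSubgroup EucPlane) (w : EucPlane) : Prop :=
  w ∈ Λ ∧ ∀ (m : ℤ) (u : EucPlane), u ∈ Λ → w = m • u → m = 1 ∨ m = -1

/-- The image of `Γ` under the linear isometry `R`. -/
def latticeMap (R : EucPlane ≃ₗᵢ[ℝ] EucPlane) (Γ : AddSubgroup EucPlane) :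
    AddSubgroup EucPlane :=
  Γ.map (R.toLinearEquiv : EucPlane →ₗ[ℝ] EucPlane).toAddMonoidHom

/-- `R` is a coincidence reflection of `Γ`: a linear isometry of determinant `-1`
such that `Γ ∩ RΓ` has finite index in `Γ`. -/
def IsCoincidenceReflection (Γ : AddSubgroup EucPlane) (R : EucPlane ≃ₗᵢ[ℝ] EucPlane) : Prop :=
  LinearMap.det (R.toLinearEquiv : EucPlane →ₗ[ℝ] EucPlane) = -1 ∧
    ((Γ ⊓ latticeMap R Γ).addSubgroupOf Γ).index ≠ 0

theorem prim_int {Γ : AddSubgroup EucPlane} (hΓ : IsPlanarLattice Γ) {w : EucPlane}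
    (hw : IsPrimitiveIn Γ w) (a : ℝ) (h : a • w ∈ Γ) : ∃ n : ℤ, a = n := by
  obtain ⟨v₁, v₂, hli, rfl⟩ := hΓ
  obtain ⟨hwm, hp⟩ := hw
  obtain ⟨p, q, hpq⟩ := AddSubgroup.mem_closure_pair.1 hwm
  obtain ⟨c, d, hcd⟩ := AddSubgroup.mem_closure_pair.1 h
  rw [LinearIndependent.pair_iff] at hli
  have hg : ((Int.gcd p q : ℕ) : ℤ) = 1 := by
    obtain ⟨p', hp'⟩ := Int.gcd_dvd_left p q
    obtain ⟨q', hq'⟩ := Int.gcd_dvd_right p q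
    have := hp (Int.gcd p q : ℕ) (p' • v₁ + q' • v₂)
      (AddSubgroup.mem_closure_pair.2 ⟨p', q', rfl⟩) (by
        rw [smul_add, smul_smul, smul_smul, ← hp', ← hq', hpq])
    omega
  have hb := Int.gcd_eq_gcd_ab p q
  rw [hg] at hb
  have h0 := hli (c - a * p) (d - a * q) (by
    have e : (c : ℝ) • v₁ + (d : ℝ) • v₂ = a • ((p : ℝ) • v₁ + (q : ℝ) • v₂) := by
      simp only [Int.cast_smul_eq_zsmul]
      rw [hcd, hpq]
    rw [← sub_eq_zero] at e
    rw [← e]; module)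
  refine ⟨Int.gcdA p q * c + Int.gcdB p q * d, ?_⟩
  have hb' : (1 : ℝ) = p * Int.gcdA p q + q * Int.gcdB p q := by exact_mod_cast hb
  push_cast
  linear_combination a * hb' - (Int.gcdA p q : ℝ) * h0.1 - (Int.gcdB p q : ℝ) * h0.2

theorem parity_aux {Γ : AddSubgroup EucPlane} {w z : EucPlane}
    (hpw : IsPrimitiveIn Γ w) (hpz : IsPrimitiveIn Γ z) {x : EucPlane} (hx : x ∈ Γ)
    {a b : ℤ} (h : x = ((a : ℝ) / 2) • w + ((b : ℝ) / 2) • z) :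
    x ∈ AddSubgroup.closure {w, z} ∨
    (∃ k l : ℤ, a = 2 * k + 1 ∧ b = 2 * l + 1 ∧ ((1 : ℝ) / 2) • (w + z) ∈ Γ) := by
  have key : ∀ k l : ℤ, x - k • w - l • z ∈ Γ := fun k l =>
    Γ.sub_mem (Γ.sub_mem hx (Γ.zsmul_mem hpw.1 k)) (Γ.zsmul_mem hpz.1 l)
  obtain ⟨k, hk | hk⟩ := Int.even_or_odd' a <;> obtain ⟨l, hl | hl⟩ := Int.even_or_odd' b
  · left
    rw [AddSubgroup.mem_closure_pair]
    refine ⟨k, l, ?_⟩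
    subst hk hl
    rw [h]
    simp only [← Int.cast_smul_eq_zsmul ℝ]
    push_cast
    module
  · exfalso
    have := hpz.2 2 _ (key k l) (by
      subst hk hl
      rw [h]
      simp only [← Int.cast_smul_eq_zsmul ℝ]
      push_cast
      module)
    omega
  · exfalso
    have := hpw.2 2 _ (key k l) (by
      subst hk hl
      rw [h]
      simp only [← Int.cast_smul_eq_zsmul ℝ]
      push_cast
      module)
    omega
  · right
    refine ⟨k, l, hk, hl, ?_⟩
    convert key k l using 1
    subst hk hl
    rw [h]
    simp only [← Int.cast_smul_eq_zsmul ℝ]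
    push_cast
    module

theorem csl_eq_gammaR_or_tilde
    (Γ : AddSubgroup EucPlane) (hΓ : IsPlanarLattice Γ)
    (R : EucPlane ≃ₗᵢ[ℝ] EucPlane) (hR : IsCoincidenceReflection Γ R)
    (w z : EucPlane) (hpw : IsPrimitiveIn Γ w) (hpz : IsPrimitiveIn Γ z)
    (hRw : R w = w) (hRz : R z = -z) :
    (Γ ⊓ latticeMap R Γ = AddSubgroup.closure {w, z} ∨
      Γ ⊓ latticeMap R Γ =
        AddSubgroup.closure {((1 : ℝ) / 2) • (w + z), ((1 : ℝ) / 2) • (w - z)}) ∧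
    (Γ ⊓ latticeMap R Γ =
        AddSubgroup.closure {((1 : ℝ) / 2) • (w + z), ((1 : ℝ) / 2) • (w - z)} ↔
      Even (((AddSubgroup.closure {w, z}).addSubgroupOf Γ).index)) := by
  have ne0 : ∀ v, IsPrimitiveIn Γ v → v ≠ 0 := by
    intro v hv h0
    have := hv.2 2 0 Γ.zero_mem (by simp [h0])
    omega
  have hRc : ∀ a b : ℝ, R (a • w + b • z) = a • w - b • z := by
    intro a b
    rw [map_add, map_smul, map_smul, hRw, hRz]; module
  have hli : LinearIndependent ℝ ![w, z] := by
    rw [LinearIndependent.pair_iff]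
    intro s t hst
    have h2 := hRc s t
    rw [hst, map_zero] at h2
    have e1 : (2 * s) • w = 0 := by
      calc (2 * s) • w = (s • w + t • z) + (s • w - t • z) := by module
        _ = 0 := by rw [hst, ← h2, add_zero]
    have e2 : (2 * t) • z = 0 := by
      calc (2 * t) • z = (s • w + t • z) - (s • w - t • z) := by module
        _ = 0 := by rw [hst, ← h2, sub_zero]
    have f1 := (smul_eq_zero.1 e1).resolve_right (ne0 w hpw)
    have f2 := (smul_eq_zero.1 e2).resolve_right (ne0 z hpz)
    exact ⟨by linarith, by linarith⟩
  have hspan : ∀ x : EucPlane, ∃ a b : ℝ, x = a • w + b • z := by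
    intro x
    have h1 := hli.span_eq_top_of_card_eq_finrank (by simp)
    have h2 : x ∈ Submodule.span ℝ (Set.range ![w, z]) := by rw [h1]; trivial
    simp only [Matrix.range_cons, Matrix.range_empty, Set.union_empty, Set.singleton_union,
      Submodule.mem_span_pair] at h2
    obtain ⟨a, b, h⟩ := h2
    exact ⟨a, b, h.symm⟩
  have hRR : ∀ x, R (R x) = x := by
    intro x
    obtain ⟨a, b, rfl⟩ := hspan x
    rw [hRc, sub_eq_add_neg, ← neg_smul, hRc]; module
  have hmem : ∀ x, x ∈ Γ ⊓ latticeMap R Γ ↔ x ∈ Γ ∧ R x ∈ Γ := by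
    intro x
    rw [AddSubgroup.mem_inf]
    refine and_congr_right fun _ => ?_
    unfold latticeMap
    rw [AddSubgroup.mem_map]
    constructor
    · rintro ⟨y, hy, rfl⟩
      have : R (R y) ∈ Γ := by rwa [hRR]
      exact this
    · intro h
      exact ⟨R x, h, hRR x⟩
  have F1 : ∀ x ∈ Γ ⊓ latticeMap R Γ, ∃ a b : ℤ, x = ((a : ℝ) / 2) • w + ((b : ℝ) / 2) • z := by
    intro x hx
    rw [hmem] at hx
    obtain ⟨a, b, rfl⟩ := hspan x
    rw [hRc] at hx
    obtain ⟨m, hm⟩ := prim_int hΓ hpw (2 * a) (by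
      convert Γ.add_mem hx.1 hx.2 using 1; module)
    obtain ⟨n, hn⟩ := prim_int hΓ hpz (2 * b) (by
      convert Γ.sub_mem hx.1 hx.2 using 1; module)
    exact ⟨m, n, by rw [← hm, ← hn]; module⟩
  have hwz : AddSubgroup.closure {w, z} ≤ Γ ⊓ latticeMap R Γ := by
    rw [AddSubgroup.closure_le]
    rintro x (rfl | rfl)
    · exact (hmem _).2 ⟨hpw.1, by rw [hRw]; exact hpw.1⟩
    · exact (hmem _).2 ⟨hpz.1, by rw [hRz]; exact Γ.neg_mem hpz.1⟩
  have hnot : ((1 : ℝ) / 2) • (w + z) ∉ AddSubgroup.closure {w, z} := by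
    intro h
    obtain ⟨a, b, hab⟩ := AddSubgroup.mem_closure_pair.1 h
    have h3 : (a : ℝ) • w + (b : ℝ) • z = ((1 : ℝ) / 2) • (w + z) := by
      simpa only [Int.cast_smul_eq_zsmul] using hab
    rw [LinearIndependent.pair_iff] at hli
    have := (hli (a - 1 / 2) (b - 1 / 2) (by
      rw [← sub_eq_zero] at h3; rw [← h3]; module)).1
    have h5 : (2 : ℝ) * a = 1 := by linarith
    have h6 : 2 * a = 1 := by exact_mod_cast h5
    omega
  have hA : ((1 : ℝ) / 2) • (w + z) ∈ Γ → Γ ⊓ latticeMap R Γ =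
        AddSubgroup.closure {((1 : ℝ) / 2) • (w + z), ((1 : ℝ) / 2) • (w - z)} := by
    intro h
    have h' : ((1 : ℝ) / 2) • (w - z) ∈ Γ := by
      convert Γ.sub_mem h hpz.1 using 1; module
    have e1 : R (((1 : ℝ) / 2) • (w + z)) = ((1 : ℝ) / 2) • (w - z) := by
      rw [smul_add, hRc]; module
    apply le_antisymm
    · intro x hx
      obtain ⟨a, b, hab⟩ := F1 x hx
      rw [AddSubgroup.mem_closure_pair]
      rcases parity_aux hpw hpz ((hmem x).1 hx).1 hab with h4 | ⟨k, l, rfl, rfl, -⟩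
      · obtain ⟨c, d, rfl⟩ := AddSubgroup.mem_closure_pair.1 h4
        refine ⟨c + d, c - d, ?_⟩
        simp only [← Int.cast_smul_eq_zsmul ℝ]
        push_cast
        module
      · refine ⟨k + l + 1, k - l, ?_⟩
        rw [hab]
        simp only [← Int.cast_smul_eq_zsmul ℝ]
        push_cast
        module
    · rw [AddSubgroup.closure_le]
      rintro x (rfl | rfl)
      · exact (hmem _).2 ⟨h, by rw [e1]; exact h'⟩
      · exact (hmem _).2 ⟨h', by rw [← e1, hRR]; exact h⟩
  have hB : ((1 : ℝ) / 2) • (w + z) ∉ Γ → Γ ⊓ latticeMap R Γ = AddSubgroup.closure {w, z} := by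
    intro h
    refine le_antisymm (fun x hx => ?_) hwz
    obtain ⟨a, b, hab⟩ := F1 x hx
    rcases parity_aux hpw hpz ((hmem x).1 hx).1 hab with h4 | ⟨k, l, -, -, h5⟩
    · exact h4
    · exact absurd h5 h
  have hC : Γ ⊓ latticeMap R Γ =
        AddSubgroup.closure {((1 : ℝ) / 2) • (w + z), ((1 : ℝ) / 2) • (w - z)} →
        ((1 : ℝ) / 2) • (w + z) ∈ Γ := by
    intro h
    have : ((1 : ℝ) / 2) • (w + z) ∈ Γ ⊓ latticeMap R Γ := by
      rw [h]; exact AddSubgroup.subset_closure (by simp)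
    exact this.1
  refine ⟨?_, ?_⟩
  · by_cases h : ((1 : ℝ) / 2) • (w + z) ∈ Γ
    · exact Or.inr (hA h)
    · exact Or.inl (hB h)
  set K := (AddSubgroup.closure {w, z}).addSubgroupOf Γ with hK
  have hmk : ∀ x : Γ, ((x : Γ ⧸ K) = 0) ↔ (x : EucPlane) ∈ AddSubgroup.closure {w, z} := by
    intro x
    rw [QuotientAddGroup.eq_zero_iff, hK, AddSubgroup.mem_addSubgroupOf]
  constructor
  · intro h
    have hh := hC h
    rw [even_iff_two_dvd, AddSubgroup.index]
    have ho : addOrderOf ((⟨_, hh⟩ : Γ) : Γ ⧸ K) = 2 := by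
      have : Fact (Nat.Prime 2) := ⟨Nat.prime_two⟩
      apply addOrderOf_eq_prime
      · rw [← QuotientAddGroup.mk_nsmul, hmk, AddSubgroup.mem_closure_pair]
        refine ⟨1, 1, ?_⟩
        simp only [AddSubgroup.coe_nsmul]
        module
      · rw [Ne, hmk]; exact hnot
    have hd := addOrderOf_dvd_natCard ((⟨_, hh⟩ : Γ) : Γ ⧸ K)
    rwa [ho] at hd
  · intro hev
    apply hA
    have hfg : AddGroup.FG Γ := by
      rw [AddGroup.fg_iff_addSubgroup_fg]
      obtain ⟨v₁, v₂, -, h⟩ := hΓ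
      exact ⟨{v₁, v₂}, by rw [h]; simp⟩
    have htor : IsAddTorsion (Γ ⧸ K) := by
      intro q
      obtain ⟨x, rfl⟩ := QuotientAddGroup.mk_surjective q
      rw [isOfFinAddOrder_iff_nsmul_eq_zero]
      set N := ((Γ ⊓ latticeMap R Γ).addSubgroupOf Γ).index with hN
      have hN0 : N ≠ 0 := hR.2
      refine ⟨2 * N, by omega, ?_⟩
      have h1 : N • x ∈ (Γ ⊓ latticeMap R Γ).addSubgroupOf Γ := AddSubgroup.nsmul_index_mem _ _
      rw [AddSubgroup.mem_addSubgroupOf] at h1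
      obtain ⟨a, b, hab⟩ := F1 _ h1
      rw [← QuotientAddGroup.mk_nsmul, hmk, AddSubgroup.mem_closure_pair]
      refine ⟨a, b, ?_⟩
      rw [mul_smul, AddSubgroup.coe_nsmul, hab]
      simp only [← Int.cast_smul_eq_zsmul ℝ]
      module
    have : AddGroup.FG (Γ ⧸ K) := inferInstance
    have : Finite (Γ ⧸ K) := AddCommGroup.finite_of_fg_isAddTorsion _ htor
    have : Fact (Nat.Prime 2) := ⟨Nat.prime_two⟩
    obtain ⟨q, hq⟩ := exists_prime_addOrderOf_dvd_card' (G := Γ ⧸ K) 2 hev.two_dvd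
    obtain ⟨x, rfl⟩ := QuotientAddGroup.mk_surjective q
    rw [addOrderOf_eq_prime_iff] at hq
    obtain ⟨h1, h2⟩ := hq
    rw [Ne, hmk] at h2
    rw [← QuotientAddGroup.mk_nsmul, hmk] at h1
    obtain ⟨a, b, hab⟩ := AddSubgroup.mem_closure_pair.1 h1
    have h3 : (x : EucPlane) = ((a : ℝ) / 2) • w + ((b : ℝ) / 2) • z := by
      rw [AddSubgroup.coe_nsmul] at hab
      calc (x : EucPlane) = ((1 : ℝ) / 2) • (2 • (x : EucPlane)) := by module
        _ = _ := by
          rw [← hab]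
          simp only [← Int.cast_smul_eq_zsmul ℝ]
          module
    rcases parity_aux hpw hpz x.2 h3 with h4 | ⟨_, _, _, _, h5⟩
    · exact absurd h4 h2
    · exact h5
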